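/- Gram matrix entries for the polynomials q_n: for all natural numbers k ≤ n with n ≥ 1, ∫₀¹ q_n(x)·q_k(x) dx = (-1)^{n+k} · ( (1/2)_{n-1} · k / (2·(n+2)!) ) · ∑_{j=0}^{k} [ (k+1)_j · (3/2)_j · (-(k-2)/2)_j · (-(k-1)/2)_j ] / [ (-n+3/2)_j · ((n+3)/2)_j · ((n+4)/2)_j · j! ], a terminating hypergeometric (₄F₃-type) sum (the terms with j > ⌊k/2⌋ vanish). Here (1/2)_{n-1} = Γ(n-1/2)/√π. -/

import Mathlib

open MeasureTheory intervalIntegral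

/-- The Pochhammer symbol (rising factorial) `(a)_m = a(a+1)⋯(a+m-1)` over `ℝ`. -/
noncomputable def poch (a : ℝ) (m : ℕ) : ℝ := (ascPochhammer ℝ m).eval a

/-- The polynomial `p_n(x) = ∑_{k=0}^n (n choose k) ((k/2+1)_n / n!) (-1)^{n-k} x^k`. -/
noncomputable def pAlp (n : ℕ) (x : ℝ) : ℝ :=
  ∑ k ∈ Finset.range (n + 1),
    (n.choose k : ℝ) * (poch ((k : ℝ) / 2 + 1) n / (n.factorial : ℝ)) * (-1) ^ (n - k) * x ^ k
/-- The polynomial `q_n(x) = ∑_{k=0}^n (n choose k) (((k+1)/2)_n / n!) (-1)^{n-k} x^k`. -/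
noncomputable def qAlp (n : ℕ) (x : ℝ) : ℝ :=
  ∑ k ∈ Finset.range (n + 1),
    (n.choose k : ℝ) * (poch (((k : ℝ) + 1) / 2) n / (n.factorial : ℝ)) * (-1) ^ (n - k) * x ^ k


lemma poch_zero (a : ℝ) : poch a 0 = 1 := by simp [poch]

lemma poch_succ (a : ℝ) (m : ℕ) : poch a (m + 1) = poch a m * (a + m) := by
  simp [poch, ascPochhammer_succ_eval]

lemma poch_succ_left (a : ℝ) (m : ℕ) : poch a (m + 1) = a * poch (a + 1) m := by
  simp [poch, ascPochhammer_succ_left]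

lemma poch_pos (a : ℝ) (m : ℕ) (h : 0 < a) : 0 < poch a m := ascPochhammer_pos m a h

lemma fact_poch (r n : ℕ) : (r.factorial : ℝ) * poch ((r : ℝ) + 1) n = ((r + n).factorial : ℝ) :=
  factorial_mul_ascPochhammer ℝ r n

lemma fd_inv (a : ℝ) (ha : 0 < a) (n : ℕ) : ∀ y : ℝ, 0 ≤ y →
    (fwdDiff (1 : ℝ))^[n] (fun x : ℝ => 1 / (x + a)) y
      = (-1) ^ n * (n.factorial : ℝ) / poch (y + a) (n + 1) := by
  induction n with
  | zero => intro y hy; simp [poch]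
  | succ n ih =>
    intro y hy
    rw [Function.iterate_succ_apply', fwdDiff, ih y hy, ih (y + 1) (by linarith)]
    have h1 : 0 < poch (y + a + 1) n := poch_pos _ _ (by linarith)
    have e1 : poch (y + a) (n + 1) = (y + a) * poch (y + a + 1) n := poch_succ_left _ _
    have e2 : poch (y + 1 + a) (n + 1) = poch (y + a + 1) n * (y + a + 1 + n) := by
      rw [← poch_succ]; ring_nf
    have e3 : poch (y + a) (n + 1 + 1) = (y + a) * poch (y + a + 1) n * (y + a + 1 + n) := by
      rw [poch_succ, e1]; push_cast; ring
    rw [e1, e2, e3, Nat.factorial_succ]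
    have h2 : 0 < y + a := by linarith
    have h3 : 0 < y + a + 1 + n := by positivity
    push_cast
    field_simp
    ring

lemma diff_sum (n : ℕ) (hn : 1 ≤ n) (a : ℝ) (ha : 0 < a) (P : Polynomial ℝ)
    (hP : P.natDegree ≤ n) :
    ∑ k ∈ Finset.range (n + 1), (n.choose k : ℝ) * P.eval (k : ℝ) * (-1) ^ (n - k) / ((k : ℝ) + a)
      = P.eval (-a) * ((-1) ^ n * (n.factorial : ℝ) / poch a (n + 1)) := by
  obtain ⟨Q, hQ⟩ := Polynomial.X_sub_C_dvd_sub_C_eval (a := -a) (p := P)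
  have hQd : Q.natDegree < n := by
    by_cases h0 : Q = 0
    · simp [h0]; omega
    · have h1 : (P - Polynomial.C (P.eval (-a))).natDegree = 1 + Q.natDegree := by
        rw [hQ, Polynomial.natDegree_mul (Polynomial.X_sub_C_ne_zero _) h0,
          Polynomial.natDegree_X_sub_C]
      rw [Polynomial.natDegree_sub_C] at h1
      omega
  have h1 := congrFun (Polynomial.fwdDiff_iter_eq_zero_of_degree_lt hQd) 0
  have h2 := fd_inv a ha n 0 le_rfl
  rw [fwdDiff_iter_eq_sum_shift] at h1 h2
  rw [zero_add] at h2
  simp only [zsmul_eq_mul, zero_add, nsmul_eq_mul, mul_one] at h1 h2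
  rw [← h2, Finset.mul_sum]
  rw [← add_zero (∑ k ∈ Finset.range (n + 1), P.eval (-a) * _)]
  have h1' : (0 : ℝ) = (0 : ℝ → ℝ) 0 := rfl
  rw [h1', ← h1, ← Finset.sum_add_distrib]
  refine Finset.sum_congr rfl fun k _ => ?_
  have h3 := congrArg (Polynomial.eval (k : ℝ)) hQ
  simp only [Polynomial.eval_sub, Polynomial.eval_mul, Polynomial.eval_X, Polynomial.eval_C] at h3
  have h4 : P.eval (k : ℝ) = P.eval (-a) + ((k : ℝ) + a) * Q.eval (k : ℝ) := by linarith
  have h5 : (0 : ℝ) < (k : ℝ) + a := by positivity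
  rw [h4]
  push_cast
  field_simp

lemma moment (n : ℕ) (hn : 1 ≤ n) (s : ℕ) :
    ∫ x in (0 : ℝ)..1, qAlp n x * x ^ s
      = (-1) ^ n * poch (-(s : ℝ) / 2) n / poch ((s : ℝ) + 1) (n + 1) := by
  unfold qAlp
  simp_rw [Finset.sum_mul]
  rw [intervalIntegral.integral_finsetSum
    (fun i _ => Continuous.intervalIntegrable (by fun_prop) _ _)]
  set P : Polynomial ℝ := (ascPochhammer ℝ n).comp
    (Polynomial.C (1 / 2) * Polynomial.X + Polynomial.C (1 / 2)) with hPdef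
  have hP : ∀ x : ℝ, P.eval x = poch ((x + 1) / 2) n := by
    intro x
    simp only [hPdef, poch, Polynomial.eval_comp, Polynomial.eval_add, Polynomial.eval_mul,
      Polynomial.eval_C, Polynomial.eval_X]
    congr 1; ring
  have hd : P.natDegree ≤ n := by
    rw [hPdef, Polynomial.natDegree_comp, ascPochhammer_natDegree]
    calc n * _ ≤ n * 1 := Nat.mul_le_mul_left _ Polynomial.natDegree_linear_le
      _ = n := mul_one n
  have h := diff_sum n hn ((s : ℝ) + 1) (by positivity) P hd
  have hf : (n.factorial : ℝ) ≠ 0 := by positivity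
  have e : ∀ k ∈ Finset.range (n + 1),
      ∫ x in (0 : ℝ)..1, (n.choose k : ℝ) * (poch (((k : ℝ) + 1) / 2) n / (n.factorial : ℝ))
        * (-1) ^ (n - k) * x ^ k * x ^ s
      = (n.factorial : ℝ)⁻¹ * ((n.choose k : ℝ) * P.eval (k : ℝ) * (-1) ^ (n - k)
        / ((k : ℝ) + ((s : ℝ) + 1))) := by
    intro k _
    simp_rw [mul_assoc _ (_ ^ k) (_ ^ s), ← pow_add]
    rw [intervalIntegral.integral_const_mul, integral_pow, hP]
    have : (k : ℝ) + (s + 1) ≠ 0 := by positivity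
    have : ((k + s : ℕ) : ℝ) + 1 ≠ 0 := by positivity
    push_cast at *
    simp only [one_pow, ne_eq, Nat.add_eq_zero_iff, one_ne_zero, and_false, not_false_eq_true,
      zero_pow, sub_zero]
    field_simp
    ring
  rw [Finset.sum_congr rfl e, ← Finset.mul_sum, h, hP]
  have : (-((s : ℝ) + 1) + 1) / 2 = -(s : ℝ) / 2 := by ring
  rw [this]
  field_simp

lemma poch_neg_nat (m n : ℕ) (h : m < n) : poch (-(m : ℝ)) n = 0 := by
  induction n with
  | zero => omega
  | succ n ih =>
    rw [poch_succ]
    rcases Nat.lt_succ_iff_lt_or_eq.mp h with h | h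
    · rw [ih h, zero_mul]
    · subst h; simp

lemma sum_even_odd (f : ℕ → ℝ) (m : ℕ) :
    ∑ s ∈ Finset.range (2 * m), f s = ∑ i ∈ Finset.range m, (f (2 * i) + f (2 * i + 1)) := by
  induction m with
  | zero => simp
  | succ m ih =>
    rw [Finset.sum_range_succ, ← ih, show 2 * (m + 1) = 2 * m + 1 + 1 by ring,
      Finset.sum_range_succ, Finset.sum_range_succ]
    ring

lemma desc_succ (k m : ℕ) :
    (k.descFactorial (m + 1) : ℝ) = ((k : ℝ) - m) * k.descFactorial m := by
  rw [Nat.descFactorial_succ]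
  rcases Nat.lt_or_ge k m with h | h
  · rw [Nat.descFactorial_eq_zero_iff_lt.2 h]; simp
  · push_cast [Nat.cast_sub h]; ring

lemma facA (k i : ℕ) : (k.choose (2 * i + 1) : ℝ) * ((2 * i + 1).factorial : ℝ)
    = k * 4 ^ i * poch (-((k : ℝ) - 2) / 2) i * poch (-((k : ℝ) - 1) / 2) i := by
  have h : (k.choose (2 * i + 1) : ℝ) * ((2 * i + 1).factorial : ℝ)
      = k.descFactorial (2 * i + 1) := by
    rw [Nat.descFactorial_eq_factorial_mul_choose]; push_cast; ring
  rw [h]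
  clear h
  induction i with
  | zero => simp [poch]
  | succ i ih =>
    rw [show 2 * (i + 1) + 1 = 2 * i + 1 + 1 + 1 by ring, desc_succ, desc_succ, ih, poch_succ,
      poch_succ]
    push_cast
    ring

lemma facB (k i : ℕ) : poch ((i : ℝ) + 1) k * (i.factorial : ℝ)
    = poch ((k : ℝ) + 1) i * (k.factorial : ℝ) := by
  have h1 := fact_poch i k
  have h2 := fact_poch k i
  rw [add_comm k i] at h2
  linarith

lemma facC (n i : ℕ) : poch (-(i : ℝ) - 1 / 2) n * poch (-(n : ℝ) + 3 / 2) i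
    = poch (-1 / 2) n * poch (3 / 2) i := by
  induction i with
  | zero => simp [poch]; norm_num
  | succ i ih =>
    have h1 := poch_succ (-(i : ℝ) - 3 / 2) n
    rw [poch_succ_left, show -(i : ℝ) - 3 / 2 + 1 = -(i : ℝ) - 1 / 2 by ring] at h1
    rw [poch_succ, poch_succ, show -((i + 1 : ℕ) : ℝ) - 1 / 2 = -(i : ℝ) - 3 / 2 by push_cast; ring]
    linear_combination (3 / 2 + (i : ℝ)) * ih + poch (-(n : ℝ) + 3 / 2) i * h1

lemma facC_ne (n i : ℕ) : poch (-(n : ℝ) + 3 / 2) i ≠ 0 := by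
  induction i with
  | zero => simp [poch]
  | succ i ih =>
    rw [poch_succ]
    refine mul_ne_zero ih fun h => ?_
    have h2 : (2 * (i : ℝ) + 3) = 2 * n := by linarith
    have h3 : 2 * i + 3 = 2 * n := by exact_mod_cast h2
    omega

lemma facD (n i : ℕ) : ((2 * i + 1).factorial : ℝ) * poch (((2 * i + 1 : ℕ) : ℝ) + 1) (n + 1)
    = ((n + 2).factorial : ℝ) * 4 ^ i * poch (((n : ℝ) + 3) / 2) i
      * poch (((n : ℝ) + 4) / 2) i := by
  rw [fact_poch]
  induction i with
  | zero => simp [poch]; rw [show 1 + (n + 1) = n + 2 by ring]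
  | succ i ih =>
    rw [show 2 * (i + 1) + 1 + (n + 1) = (2 * i + 1 + (n + 1)) + 1 + 1 by ring,
      Nat.factorial_succ, Nat.factorial_succ, Nat.cast_mul, Nat.cast_mul, ih, poch_succ, poch_succ]
    push_cast
    ring

/-- Gram matrix entries: for `1 ≤ n` and `k ≤ n`,
`∫₀¹ q_n q_k = (-1)^{n+k} ((1/2)_{n-1} k/(2 (n+2)!)) ₄F₃`-type terminating sum. -/
theorem gram_qAlp (n k : ℕ) (hn : 1 ≤ n) (hkn : k ≤ n) :
    ∫ x in (0 : ℝ)..1, qAlp n x * qAlp k x =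
      (-1) ^ (n + k) * (poch (1 / 2) (n - 1) * (k : ℝ) / (2 * ((n + 2).factorial : ℝ))) *
        ∑ j ∈ Finset.range (k + 1),
          (poch ((k : ℝ) + 1) j * poch (3 / 2) j * poch (-((k : ℝ) - 2) / 2) j
              * poch (-((k : ℝ) - 1) / 2) j) /
            (poch (-(n : ℝ) + 3 / 2) j * poch (((n : ℝ) + 3) / 2) j
              * poch (((n : ℝ) + 4) / 2) j * (j.factorial : ℝ)) := by

  have hq : ∀ x : ℝ, qAlp n x * qAlp k x = ∑ s ∈ Finset.range (k + 1),
      ((k.choose s : ℝ) * (poch (((s : ℝ) + 1) / 2) k / (k.factorial : ℝ)) * (-1) ^ (k - s))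
        * (qAlp n x * x ^ s) := by
    intro x
    conv_lhs => rw [qAlp.eq_1 k, Finset.mul_sum]
    exact Finset.sum_congr rfl fun s _ => by ring
  have hc : Continuous (qAlp n) := by unfold qAlp; fun_prop
  simp_rw [hq]
  rw [intervalIntegral.integral_finsetSum
    (fun i _ => Continuous.intervalIntegrable (by fun_prop) _ _)]
  simp_rw [intervalIntegral.integral_const_mul, moment n hn]
  rw [Finset.sum_subset (s₂ := Finset.range (2 * (k + 1)))
    (Finset.range_subset_range.2 (by omega))
    (fun s _ hs => by
      rw [Nat.choose_eq_zero_of_lt (by simpa using hs)]; simp)]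
  rw [sum_even_odd, Finset.mul_sum]
  refine Finset.sum_congr rfl fun i _ => ?_
  have hev : (k.choose (2 * i) : ℝ) * poch (-((2 * i : ℕ) : ℝ) / 2) n = 0 := by
    rcases Nat.lt_or_ge k (2 * i) with h | h
    · rw [Nat.choose_eq_zero_of_lt h]; simp
    · rw [show -((2 * i : ℕ) : ℝ) / 2 = -(i : ℝ) by push_cast; ring,
        poch_neg_nat i n (by omega), mul_zero]
  have hodd : (k.choose (2 * i + 1) : ℝ) * (-1) ^ (k - (2 * i + 1))
      = (k.choose (2 * i + 1) : ℝ) * (-(-1) ^ k) := by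
    rcases Nat.lt_or_ge k (2 * i + 1) with h | h
    · rw [Nat.choose_eq_zero_of_lt h]; simp
    · obtain ⟨d, rfl⟩ := Nat.exists_eq_add_of_le h
      rw [Nat.add_sub_cancel_left, pow_add, pow_succ, pow_mul]
      norm_num
  have hA := facA k i
  have hB := facB k i
  have hC := facC n i
  have hD := facD n i
  have hC' : poch (-1 / 2) n = -(1 / 2) * poch (1 / 2) (n - 1) := by
    obtain ⟨m, rfl⟩ := Nat.exists_eq_add_of_le' hn
    rw [poch_succ_left, Nat.add_sub_cancel]
    norm_num
  rw [hC'] at hC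
  have e1 : (((2 * i + 1 : ℕ) : ℝ) + 1) / 2 = (i : ℝ) + 1 := by push_cast; ring
  have e2 : -((2 * i + 1 : ℕ) : ℝ) / 2 = -(i : ℝ) - 1 / 2 := by push_cast; ring
  have n1 : poch (((2 * i + 1 : ℕ) : ℝ) + 1) (n + 1) ≠ 0 := (poch_pos _ _ (by positivity)).ne'
  have n2 := facC_ne n i
  have n3 : poch (((n : ℝ) + 3) / 2) i ≠ 0 := (poch_pos _ _ (by positivity)).ne'
  have n4 : poch (((n : ℝ) + 4) / 2) i ≠ 0 := (poch_pos _ _ (by positivity)).ne'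
  have f1 : (i.factorial : ℝ) ≠ 0 := by positivity
  have f2 : (k.factorial : ℝ) ≠ 0 := by positivity
  have f3 : ((n + 2).factorial : ℝ) ≠ 0 := by positivity
  have f4 : ((2 * i + 1).factorial : ℝ) ≠ 0 := by positivity
  rw [e1, e2]
  have z : (k.choose (2 * i) : ℝ) * (poch ((((2 * i : ℕ) : ℝ) + 1) / 2) k / (k.factorial : ℝ))
      * (-1) ^ (k - 2 * i) * ((-1) ^ n * poch (-((2 * i : ℕ) : ℝ) / 2) n
        / poch (((2 * i : ℕ) : ℝ) + 1) (n + 1)) = 0 := by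
    linear_combination ((poch ((((2 * i : ℕ) : ℝ) + 1) / 2) k / (k.factorial : ℝ))
      * (-1) ^ (k - 2 * i) * ((-1) ^ n / poch (((2 * i : ℕ) : ℝ) + 1) (n + 1))) * hev
  rw [z, zero_add]
  generalize poch (((2 * i + 1 : ℕ) : ℝ) + 1) (n + 1) = D at *
  have gA : (k.choose (2 * i + 1) : ℝ) = k * 4 ^ i * poch (-((k : ℝ) - 2) / 2) i
      * poch (-((k : ℝ) - 1) / 2) i / ((2 * i + 1).factorial : ℝ) := by
    rw [eq_div_iff f4]; exact hA
  have gB : poch ((i : ℝ) + 1) k = poch ((k : ℝ) + 1) i * (k.factorial : ℝ) / i.factorial := by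
    rw [eq_div_iff f1]; exact hB
  have gC : poch (-(i : ℝ) - 1 / 2) n = -(1 / 2) * poch (1 / 2) (n - 1) * poch (3 / 2) i
      / poch (-(n : ℝ) + 3 / 2) i := by
    rw [eq_div_iff n2]; exact hC
  have gD : D = ((n + 2).factorial : ℝ) * 4 ^ i * poch (((n : ℝ) + 3) / 2) i
      * poch (((n : ℝ) + 4) / 2) i / ((2 * i + 1).factorial : ℝ) := by
    rw [eq_div_iff f4, ← hD]; ring
  rw [mul_right_comm (k.choose (2 * i + 1) : ℝ), hodd, gA, gB, gC, gD]
  rw [pow_add]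
  field_simp
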